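/- Let a, b, c, d, e, f ∈ ℝ and let D be the real 6×6 matrix with rows (0,−d,−e,b,c,0), (d,0,−f,−a,0,c), (e,f,0,0,−a,−b), (−b,a,0,0,−f,e), (−c,0,a,f,0,−d), (0,−c,b,−e,d,0). Set λ₁² = (a+f)² + (b−e)² + (c+d)² and λ₂² = (a−f)² + (b+e)² + (c−d)². Then the characteristic polynomial of D equals X²·(X² + λ₁²)·(X² + λ₂²); in particular the complex eigenvalues of D are 0 (with multiplicity two), ±i·λ₁ and ±i·λ₂. -/

import Mathlib

open Polynomial

/-!
In the decomposition of `𝔰𝔬(4)` into the spans of `e₁₂, e₁₃, e₁₄` and of `e₂₃, e₂₄, e₃₄`, the Hodge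
star of `𝔰𝔬(4) = Λ²ℝ⁴` is off-diagonal, with the same matrix `S` in both blocks. It commutes with
`ad(X)`, so the graph of `S`, which is the ideal of self-dual elements, is invariant. Shearing
along `S` makes `ad(X)` block triangular without dividing by `2`; its diagonal blocks are the
actions on the self-dual ideal and on the quotient by it. Both are skew-symmetric `3 × 3` matrices,
that is, cross products with a vector, and the squared lengths of these vectors are `λ₁²` and `λ₂²`.
-/

section BlockMatrices

open Matrix

variable {R m n : Type*} [CommRing R] [Fintype m] [DecidableEq m] [Fintype n] [DecidableEq n]

-- The Riccati equation `hS` says that the graph of `S` is invariant under the block matrix.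
lemma charpoly_fromBlocks_of_riccati (A : Matrix m m R) (B : Matrix m n R) (C : Matrix n m R)
    (D : Matrix n n R) (S : Matrix n m R) (hS : C + D * S = S * (A + B * S)) :
    (fromBlocks A B C D).charpoly = (A + B * S).charpoly * (D - S * B).charpoly := by
  have shear_mul_shear : fromBlocks 1 0 S 1 * fromBlocks 1 0 (-S) 1 =
      (1 : Matrix (m ⊕ n) (m ⊕ n) R) := by
    simp [fromBlocks_multiply]
  have shear_conj : fromBlocks 1 0 (-S) 1 * (fromBlocks A B C D * fromBlocks 1 0 S 1) =
      fromBlocks (A + B * S) B 0 (D - S * B) := by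
    simp [fromBlocks_multiply, hS, sub_eq_neg_add]
  calc (fromBlocks A B C D).charpoly
      = (fromBlocks A B C D * fromBlocks 1 0 S 1 * fromBlocks 1 0 (-S) 1).charpoly := by
        rw [Matrix.mul_assoc, shear_mul_shear, Matrix.mul_one]
    _ = (fromBlocks (A + B * S) B 0 (D - S * B)).charpoly := by
        rw [charpoly_mul_comm, shear_conj]
    _ = (A + B * S).charpoly * (D - S * B).charpoly := charpoly_fromBlocks_zero₂₁ ..

end BlockMatrices

section SoFour

open Matrix

variable {R : Type*} [CommRing R]

/-- The skew-symmetric `3 × 3` matrix with zero diagonal and entries `x, y, z` below it; the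
diagonal blocks of `ad(X)`, before and after the shear, have this form. -/
def skewThree (x y z : R) : Matrix (Fin 3) (Fin 3) R :=
  !![0, -x, -y;
     x, 0, -z;
     y, z, 0]

lemma charpoly_skewThree (x y z : R) :
    (skewThree x y z).charpoly = X * (X ^ 2 + C (x ^ 2 + y ^ 2 + z ^ 2)) := by
  have charmatrix_eq : (skewThree x y z).charmatrix =
      !![X, C x, C y;
         -C x, X, C z;
         -C y, -C z, X] := by
    ext1 i j
    fin_cases i <;> fin_cases j <;> simp [skewThree, charmatrix]
  rw [charpoly, charmatrix_eq, det_fin_three]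
  simp only [of_apply, cons_val, map_add, map_pow]
  ring

/-- The Hodge star `e₁₂ ↦ e₃₄`, `e₁₃ ↦ -e₂₄`, `e₁₄ ↦ e₂₃`, from the basis `e₁₂, e₁₃, e₁₄` to the
basis `e₂₃, e₂₄, e₃₄`. The star in the opposite direction has the same matrix. -/
def hodgeStarBlock (R : Type*) [CommRing R] : Matrix (Fin 3) (Fin 3) R :=
  !![0, 0, 1;
     0, -1, 0;
     1, 0, 0]

/-- The block of the matrix of `ad(X)` with rows indexed by `e₁₂, e₁₃, e₁₄` and columns by
`e₂₃, e₂₄, e₃₄`. -/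
def adOffDiagBlock (a b c : R) : Matrix (Fin 3) (Fin 3) R :=
  !![b, c, 0;
     -a, 0, c;
     0, -a, -b]

lemma skewThree_mul_hodgeStarBlock (x y z : R) :
    skewThree z (-y) x * hodgeStarBlock R = hodgeStarBlock R * skewThree x y z := by
  simp [skewThree, hodgeStarBlock]

lemma hodgeStarBlock_mul_adOffDiagBlock_mul_hodgeStarBlock (a b c : R) :
    hodgeStarBlock R * (adOffDiagBlock a b c * hodgeStarBlock R) = -(adOffDiagBlock a b c)ᵀ := by
  ext i j
  fin_cases i <;> fin_cases j <;> simp [adOffDiagBlock, hodgeStarBlock]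

lemma skewThree_add_adOffDiagBlock_mul_hodgeStarBlock (a b c d e f : R) :
    skewThree d e f + adOffDiagBlock a b c * hodgeStarBlock R =
      skewThree (c + d) (e - b) (a + f) := by
  ext i j
  fin_cases i <;> fin_cases j <;>
    simp [skewThree, adOffDiagBlock, hodgeStarBlock, sub_eq_add_neg, add_comm]

lemma skewThree_sub_hodgeStarBlock_mul_adOffDiagBlock (a b c d e f : R) :
    skewThree f (-e) d - hodgeStarBlock R * adOffDiagBlock a b c =
      skewThree (f - a) (-(b + e)) (d - c) := by
  ext i j
  fin_cases i <;> fin_cases j <;>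
    simp [skewThree, adOffDiagBlock, hodgeStarBlock, sub_eq_add_neg, add_comm]

lemma charpoly_fromBlocks_skewThree_adOffDiagBlock (a b c d e f : R) :
    (fromBlocks (skewThree d e f) (adOffDiagBlock a b c)
      (-(adOffDiagBlock a b c)ᵀ) (skewThree f (-e) d)).charpoly =
    (skewThree (c + d) (e - b) (a + f)).charpoly *
      (skewThree (f - a) (-(b + e)) (d - c)).charpoly := by
  have hriccati : -(adOffDiagBlock a b c)ᵀ + skewThree f (-e) d * hodgeStarBlock R =
      hodgeStarBlock R * (skewThree d e f + adOffDiagBlock a b c * hodgeStarBlock R) := by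
    rw [skewThree_mul_hodgeStarBlock, Matrix.mul_add,
      hodgeStarBlock_mul_adOffDiagBlock_mul_hodgeStarBlock, add_comm]
  rw [charpoly_fromBlocks_of_riccati _ _ _ _ _ hriccati,
    skewThree_add_adOffDiagBlock_mul_hodgeStarBlock,
    skewThree_sub_hodgeStarBlock_mul_adOffDiagBlock]

theorem so4_derivation_charpoly_general (a b c d e f : R) :
    Matrix.charpoly
      (!![0, -d, -e, b, c, 0;
          d, 0, -f, -a, 0, c;
          e, f, 0, 0, -a, -b;
          -b, a, 0, 0, -f, e;
          -c, 0, a, f, 0, -d;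
          0, -c, b, -e, d, 0] : Matrix (Fin 6) (Fin 6) R)
      = X ^ 2 * (X ^ 2 + C ((a + f) ^ 2 + (b - e) ^ 2 + (c + d) ^ 2))
          * (X ^ 2 + C ((a - f) ^ 2 + (b + e) ^ 2 + (c - d) ^ 2)) := by
  have hlower : -(adOffDiagBlock a b c)ᵀ = !![-b, a, 0; -c, 0, a; 0, -c, b] := by
    ext i j
    fin_cases i <;> fin_cases j <;> simp [adOffDiagBlock]
  have hblocks : !![0, -d, -e, b, c, 0;
          d, 0, -f, -a, 0, c;
          e, f, 0, 0, -a, -b;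
          -b, a, 0, 0, -f, e;
          -c, 0, a, f, 0, -d;
          0, -c, b, -e, d, 0] =
      reindex finSumFinEquiv finSumFinEquiv
        (fromBlocks (skewThree d e f) (adOffDiagBlock a b c)
          (-(adOffDiagBlock a b c)ᵀ) (skewThree f (-e) d)) := by
    rw [hlower, skewThree, skewThree, neg_neg]
    ext i j
    fin_cases i <;> fin_cases j <;> rfl
  rw [hblocks, charpoly_reindex, charpoly_fromBlocks_skewThree_adOffDiagBlock,
    charpoly_skewThree, charpoly_skewThree]
  simp only [map_add, map_sub, map_neg, map_pow]
  ring

end SoFour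

/-- The characteristic polynomial of the matrix of the derivation `ad(X)` of `𝔰𝔬(4)`,
where `X = a·e₁₂ + b·e₁₃ + c·e₁₄ + d·e₂₃ + e·e₂₄ + f·e₃₄`, is
`X² (X² + λ₁²)(X² + λ₂²)` with `λ₁² = (a+f)² + (b−e)² + (c+d)²` and
`λ₂² = (a−f)² + (b+e)² + (c−d)²`. -/
theorem so4_derivation_charpoly (a b c d e f : ℝ) :
    Matrix.charpoly
      (!![0, -d, -e, b, c, 0;
          d, 0, -f, -a, 0, c;
          e, f, 0, 0, -a, -b;
          -b, a, 0, 0, -f, e;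
          -c, 0, a, f, 0, -d;
          0, -c, b, -e, d, 0] : Matrix (Fin 6) (Fin 6) ℝ)
      = X ^ 2 * (X ^ 2 + C ((a + f) ^ 2 + (b - e) ^ 2 + (c + d) ^ 2))
          * (X ^ 2 + C ((a - f) ^ 2 + (b + e) ^ 2 + (c - d) ^ 2)) :=
  so4_derivation_charpoly_general a b c d e f
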